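/- Discrete time shifts: under these hypotheses, for all n ∈ ℤ, C_1·M_n − M_n·C_1 = (1−q)·M_{n+1} and (A^{−1}·C_r)·M_n − M_n·(A^{−1}·C_r) = (1−q^{−1})·M_{n-1}, where M_n := M_{1,n}. -/

import Mathlib

/-- ξ_{α,n} := M_{α,n} · M_{α,n+1}⁻¹ -/
def xiv {R : Type*} [Ring R] (M Mi : ℕ → ℤ → R) (α : ℕ) (n : ℤ) : R :=
  M α n * Mi α (n + 1)

/-- ξ_{α,n}⁻¹ = M_{α,n+1} · M_{α,n}⁻¹ -/
def xivInv {R : Type*} [Ring R] (M Mi : ℕ → ℤ → R) (α : ℕ) (n : ℤ) : R :=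
  M α (n + 1) * Mi α n

/-- x_{α,n} := ξ_{α,n}⁻¹ · ξ_{α-1,n} -/
def xv {R : Type*} [Ring R] (M Mi : ℕ → ℤ → R) (α : ℕ) (n : ℤ) : R :=
  xivInv M Mi α n * xiv M Mi (α - 1) n

/-- The Miura coefficient C_{m,n} = Σ_{r+1 ≥ α₁ > ⋯ > α_m ≥ 1}
∏_{j=1}^m x_{α_j, n+(r+1-α_j)-(j-1)} (ordered product, j increasing left to right). -/
def CMiura {R : Type*} [Ring R] (M Mi : ℕ → ℤ → R) (r : ℕ) (m : ℕ) (n : ℤ) : R :=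
  ∑ S ∈ Finset.powersetCard m (Finset.Icc 1 (r + 1)),
    (((S.sort (· ≤ ·)).reverse.zipIdx).map
      (fun ji => xv M Mi ji.1 (n + ((r : ℤ) + 1 - (ji.1 : ℤ)) - (ji.2 : ℤ)))).prod


section helpers

def QC {G : Type*} [Group G] (q : G) (k : ℤ) (g x : G) : Prop := g * x = q ^ k * (x * g)

lemma QC.mul' {G : Type*} [Group G] {q : G} (hq : ∀ x, q * x = x * q) {k l : ℤ} {g x y : G}
    (h : QC q k g x) (h' : QC q l g y) : QC q (k + l) g (x * y) := by
  unfold QC at *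
  have hc : ∀ (k : ℤ) x, q ^ k * x = x * q ^ k := fun k x => (Commute.zpow_left (hq x) k)
  calc g * (x * y) = (g * x) * y := by group
    _ = q ^ k * x * (g * y) := by rw [h]; group
    _ = q ^ k * (x * q ^ l) * (y * g) := by rw [h']; group
    _ = _ := by rw [← hc l x]; group

lemma QC.inv' {G : Type*} [Group G] {q : G} (hq : ∀ x, q * x = x * q) {k : ℤ} {g x : G}
    (h : QC q k g x) : QC q (-k) g (x⁻¹) := by
  unfold QC at *
  have hc : ∀ (k : ℤ) x, q ^ k * x = x * q ^ k := fun k x => (Commute.zpow_left (hq x) k)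
  have h2 : x⁻¹ * g = q ^ k * (g * x⁻¹) := by
    calc x⁻¹ * g = x⁻¹ * (g * x) * x⁻¹ := by group
      _ = (x⁻¹ * q ^ k) * x * g * x⁻¹ := by rw [h]; group
      _ = _ := by rw [← hc]; group
  rw [h2]; group

lemma K_group {G : Type*} [Group G] {Z w a a' b c c' : G} (hZ : ∀ x, Z * x = x * Z)
    (h1 : b * a' = Z * (a' * b)) (h2 : a * c' = w * (c' * a)) (h3 : c * c' = w * (c' * c))
    (h4 : a * a' = Z * (a' * a)) (h5 : a * b = b * a) (h6 : a * c = c * a) :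
    (a * a'⁻¹) * (b * c * a⁻¹ * a⁻¹) * (c * c'⁻¹)⁻¹ = b * a'⁻¹ * (c' * a⁻¹) := by
  have e1 : a'⁻¹ * b = Z * (b * a'⁻¹) := by
    calc a'⁻¹ * b = a'⁻¹ * (b * a') * a'⁻¹ := by group
      _ = (a'⁻¹ * Z) * (a' * b) * a'⁻¹ := by rw [h1]; group
      _ = _ := by rw [← hZ]; group
  have e2 : Z * (a * a'⁻¹ * a⁻¹) = a'⁻¹ := by
    have h4' : a' * (a * a'⁻¹ * a⁻¹) = Z⁻¹ := by
      have : a' * a = Z⁻¹ * (a * a') := by rw [h4]; group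
      calc a' * (a * a'⁻¹ * a⁻¹) = (a' * a) * (a'⁻¹ * a⁻¹) := by group
        _ = _ := by rw [this]; group
    have : a * a'⁻¹ * a⁻¹ = a'⁻¹ * Z⁻¹ := by rw [← h4']; group
    rw [this, ← mul_assoc, hZ]; group
  have e3 : c * a⁻¹ * a⁻¹ * c' * c⁻¹ = a⁻¹ * c' * a⁻¹ := by
    have h6' : c * a⁻¹ = a⁻¹ * c := by
      rw [mul_inv_eq_iff_eq_mul, mul_assoc, ← h6]; group
    calc c * a⁻¹ * a⁻¹ * c' * c⁻¹ = a⁻¹ * (c * a⁻¹) * c' * c⁻¹ := by rw [h6', mul_assoc a⁻¹ c, h6']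
      _ = a⁻¹ * a⁻¹ * (c * c') * c⁻¹ := by rw [h6']; group
      _ = a⁻¹ * a⁻¹ * (w * (c' * a)) * a⁻¹ := by rw [h3]; group
      _ = _ := by rw [← h2]; group
  have h5' : b * a⁻¹ = a⁻¹ * b := by
      rw [mul_inv_eq_iff_eq_mul, mul_assoc, ← h5]; group
  calc (a * a'⁻¹) * (b * c * a⁻¹ * a⁻¹) * (c * c'⁻¹)⁻¹
      = a * a'⁻¹ * b * (c * a⁻¹ * a⁻¹ * c' * c⁻¹) := by group
    _ = a * a'⁻¹ * (b * a⁻¹) * c' * a⁻¹ := by rw [e3]; group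
    _ = (a * a'⁻¹ * a⁻¹) * b * c' * a⁻¹ := by rw [h5']; group
    _ = Z⁻¹ * (Z * (a * a'⁻¹ * a⁻¹)) * b * c' * a⁻¹ := by group
    _ = Z⁻¹ * (a'⁻¹ * b) * c' * a⁻¹ := by rw [e2]; group
    _ = _ := by rw [e1]; group

lemma U_ring {R : Type*} [Ring R] {z e a f : Rˣ} {y : R} (hz : ∀ x, z * x = x * z)
    (h1 : f * a = z * (a * f)) (h2 : (z : R) * e * f = a ^ 2 - y) :
    (((e * a⁻¹) * (f * a⁻¹) : Rˣ) : R) = 1 - y * ((a⁻¹ * a⁻¹ : Rˣ) : R) := by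
  have e1 : (e * a⁻¹) * (f * a⁻¹) = (z * e * f) * (a⁻¹ * a⁻¹) := by
    have : a⁻¹ * f = z * f * a⁻¹ := by
      calc a⁻¹ * f = a⁻¹ * (f * a) * a⁻¹ := by group
        _ = a⁻¹ * z * a * f * a⁻¹ := by rw [h1]; group
        _ = _ := by rw [← hz]; group
    calc (e * a⁻¹) * (f * a⁻¹) = e * (a⁻¹ * f) * a⁻¹ := by group
      _ = e * z * f * a⁻¹ * a⁻¹ := by rw [this]; group
      _ = _ := by rw [← hz]; group
  rw [e1, Units.val_mul, Units.val_mul, Units.val_mul, h2, sub_mul]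
  congr 1
  rw [← Units.val_pow_eq_pow_val, ← Units.val_mul]
  simp [pow_two]

def uxi {R : Type*} [Ring R] (m : ℕ → ℤ → Rˣ) (α : ℕ) (n : ℤ) : Rˣ := m α n * (m α (n + 1))⁻¹

def ux {R : Type*} [Ring R] (m : ℕ → ℤ → Rˣ) (α : ℕ) (n : ℤ) : Rˣ :=
  (uxi m α n)⁻¹ * uxi m (α - 1) n

/-- Y -/
def uY {R : Type*} [Ring R] (M : ℕ → ℤ → R) (m : ℕ → ℤ → Rˣ) (α : ℕ) (n : ℤ) : R :=
  if α = 0 then 0 else M (α + 1) n * M (α - 1) n * (((m α n)⁻¹ * (m α n)⁻¹ : Rˣ) : R)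

/-- abstract telescoping -/
lemma tele_v {R : Type*} [Ring R] (r : ℕ) (ξ : ℕ → ℤ → Rˣ) (Y : ℕ → ℤ → R)
    (hY0 : ∀ n, Y 0 n = 0) (hYt : ∀ n, Y (r + 1) n = 0)
    (hU : ∀ α n, α ≤ r + 1 → (((ξ α n)⁻¹ * ξ α (n - 1) : Rˣ) : R) = 1 - Y α n)
    (hK : ∀ β n, β ≤ r + 1 → (ξ β n : R) * Y β n * ((ξ (β - 1) n)⁻¹ : Rˣ)
      = ξ (β + 1) n * Y β (n + 1) * ((ξ β n)⁻¹ : Rˣ)) (n : ℤ) :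
    ∑ k ∈ Finset.range (r + 1), ((ξ (k + 1) n * (ξ k (n + 1))⁻¹ : Rˣ) : R)
     = ∑ k ∈ Finset.range (r + 1), ((ξ (k + 1) (n - 1) * (ξ k n)⁻¹ : Rˣ) : R) := by
  rw [← sub_eq_zero, ← Finset.sum_sub_distrib]
  have key : ∀ k ∈ Finset.range (r + 1),
      ((ξ (k + 1) n * (ξ k (n + 1))⁻¹ : Rˣ) : R) - ((ξ (k + 1) (n - 1) * (ξ k n)⁻¹ : Rˣ) : R)
      = (fun β => (ξ (β + 1) n : R) * Y β (n + 1) * ((ξ β n)⁻¹ : Rˣ)) (k + 1)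
       - (fun β => (ξ (β + 1) n : R) * Y β (n + 1) * ((ξ β n)⁻¹ : Rˣ)) k := by
    intro k hk
    have hk' : k < r + 1 := Finset.mem_range.1 hk
    have a1 : ((ξ (k + 1) n * (ξ k (n + 1))⁻¹ : Rˣ) : R)
        = ξ (k + 1) n * (1 - Y k (n + 1)) * ((ξ k n)⁻¹ : Rˣ) := by
      rw [← hU k (n + 1) (by omega), ← Units.val_mul, ← Units.val_mul, add_sub_cancel_right]
      congr 1; group
    have a2 : ((ξ (k + 1) (n - 1) * (ξ k n)⁻¹ : Rˣ) : R)
        = ξ (k + 1) n * (1 - Y (k + 1) n) * ((ξ k n)⁻¹ : Rˣ) := by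
      rw [← hU (k + 1) n (by omega), ← Units.val_mul, ← Units.val_mul]
      congr 1; group
    have a3 := hK (k + 1) n (by omega)
    simp only [Nat.add_sub_cancel] at a3
    simp only
    rw [← a3, a1, a2]
    noncomm_ring
  rw [Finset.sum_congr rfl key,
    Finset.sum_range_sub (fun β => (ξ (β + 1) n : R) * Y β (n + 1) * ((ξ β n)⁻¹ : Rˣ))]
  simp [hY0, hYt]

lemma tele_x {R : Type*} [Ring R] (r : ℕ) (ξ : ℕ → ℤ → Rˣ) (Y : ℕ → ℤ → R)
    (hY0 : ∀ n, Y 0 n = 0) (hYt : ∀ n, Y (r + 1) n = 0)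
    (hU : ∀ α n, α ≤ r + 1 → (((ξ α n)⁻¹ * ξ α (n - 1) : Rˣ) : R) = 1 - Y α n)
    (hK : ∀ β n, β ≤ r + 1 → (ξ β n : R) * Y β n * ((ξ (β - 1) n)⁻¹ : Rˣ)
      = ξ (β + 1) n * Y β (n + 1) * ((ξ β n)⁻¹ : Rˣ)) (s : ℤ) :
    ∑ k ∈ Finset.range (r + 1), (((ξ (k + 1) (s - k))⁻¹ * (ξ k (s - k)) : Rˣ) : R)
     = ∑ k ∈ Finset.range (r + 1), (((ξ (k + 1) (s - 1 - k))⁻¹ * (ξ k (s - 1 - k)) : Rˣ) : R) := by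
  rw [← sub_eq_zero, ← Finset.sum_sub_distrib]
  have key : ∀ k ∈ Finset.range (r + 1),
      (((ξ (k + 1) (s - k))⁻¹ * (ξ k (s - k)) : Rˣ) : R)
       - (((ξ (k + 1) (s - 1 - k))⁻¹ * (ξ k (s - 1 - k)) : Rˣ) : R)
      = -((fun β : ℕ => Y β (s - β + 1) * (((ξ β (s - β))⁻¹ * ξ (β - 1) (s - β) : Rˣ) : R)) (k + 1)
       - (fun β : ℕ => Y β (s - β + 1) * (((ξ β (s - β))⁻¹ * ξ (β - 1) (s - β) : Rˣ) : R)) k) := by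
    intro k hk
    have hk' : k < r + 1 := Finset.mem_range.1 hk
    have en : s - 1 - (k : ℤ) = s - k - 1 := by ring
    have en2 : s - ((k + 1 : ℕ) : ℤ) + 1 = s - k := by push_cast; ring
    have en3 : s - ((k + 1 : ℕ) : ℤ) = s - k - 1 := by push_cast; ring
    simp only
    rw [en2, en3, en]
    generalize s - (k : ℤ) = n
    simp only [Nat.add_sub_cancel]
    have a1 : (((ξ (k + 1) n)⁻¹ * (ξ k (n - 1)) : Rˣ) : R)
        = (((ξ (k + 1) n)⁻¹ * (ξ k n) : Rˣ) : R) * (1 - Y k n) := by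
      rw [← hU k n (by omega), ← Units.val_mul]
      congr 1; group
    have a2 : (((ξ (k + 1) n)⁻¹ * (ξ k (n - 1)) : Rˣ) : R)
        = (1 - Y (k + 1) n) * (((ξ (k + 1) (n - 1))⁻¹ * (ξ k (n - 1)) : Rˣ) : R) := by
      rw [← hU (k + 1) n (by omega), ← Units.val_mul]
      congr 1; group
    have a3 : (((ξ (k + 1) n)⁻¹ * (ξ k n) : Rˣ) : R) * Y k n
        = Y k (n + 1) * (((ξ k n)⁻¹ * ξ (k - 1) n : Rˣ) : R) := by
      have := hK k n (by omega)
      have h2 := congrArg (fun t => (((ξ (k + 1) n)⁻¹ : Rˣ) : R) * t * (ξ (k - 1) n)) this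
      simpa [mul_assoc] using h2
    rw [← a3]
    rw [a1, mul_sub, mul_one, sub_mul, one_mul] at a2
    generalize (((ξ (k + 1) n)⁻¹ * (ξ k n) : Rˣ) : R) * Y k n = p at *
    generalize Y (k + 1) n * (((ξ (k + 1) (n - 1))⁻¹ * (ξ k (n - 1)) : Rˣ) : R) = p2 at *
    rw [neg_sub, sub_eq_sub_iff_add_eq_add]
    rw [sub_eq_sub_iff_add_eq_add] at a2
    rw [a2, add_comm]
  rw [Finset.sum_congr rfl key, Finset.sum_neg_distrib,
    Finset.sum_range_sub (fun β : ℕ =>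
      Y β (s - β + 1) * (((ξ β (s - β))⁻¹ * ξ (β - 1) (s - β) : Rˣ) : R))]
  simp [hY0, hYt]

lemma prod_desc {R : Type*} [Ring R] (M Mi : ℕ → ℤ → R) (m : ℕ → ℤ → Rˣ) (c : ℤ) (t : ℕ)
    (k : ℕ) : ∀ (i : ℕ), 
    (∀ α n, 1 ≤ α → α ≤ t + k → xv M Mi α n = ux m α n) →
    (((List.range' (t + 1) k).reverse.zipIdx i).map
      (fun ji => xv M Mi ji.1 (c - (ji.1 : ℤ) - (ji.2 : ℤ)))).prod
    = (((uxi m (t + k) (c - (t + k) - i))⁻¹ * uxi m t (c - (t + k) - i) : Rˣ) : R) := by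
  induction k with
  | zero => intro i hx; simp
  | succ k ih =>
    intro i hx
    rw [List.range'_concat]
    simp only [one_mul, List.reverse_append, List.reverse_cons, List.reverse_nil, List.nil_append,
      List.singleton_append, List.zipIdx_cons, List.map_cons, List.prod_cons]
    rw [ih (i + 1) (fun α n h1 h2 => hx α n h1 (by omega)), hx _ _ (by omega) (by omega),
      ← Units.val_mul]
    congr 1
    have e1 : c - (t + k) - ((i + 1 : ℕ) : ℤ) = c - (t + (k + 1 : ℕ)) - i := by push_cast; ring
    have e2 : c - ((t + 1 + k : ℕ) : ℤ) - i = c - (t + (k + 1 : ℕ)) - i := by push_cast; ring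
    rw [e1, e2, ux]
    have e3 : t + 1 + k - 1 = t + k := by omega
    have e4 : t + 1 + k = t + (k + 1) := by omega
    rw [e3, e4]
    group

lemma sort_erase (r t : ℕ) (ht : t ≤ r) :
    ((Finset.Icc 1 (r + 1)).erase (t + 1)).sort (· ≤ ·)
      = List.range' 1 t ++ List.range' (t + 2) (r - t) := by
  have hnd : (List.range' 1 t ++ List.range' (t + 2) (r - t)).Nodup := by
    rw [List.nodup_append]
    refine ⟨List.nodup_range', List.nodup_range', ?_⟩
    intro a ha b hb
    simp only [List.mem_range'_1] at ha hb
    omega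
  have hs : (List.range' 1 t ++ List.range' (t + 2) (r - t)).Pairwise (· ≤ ·) := by
    rw [List.pairwise_append]
    refine ⟨List.pairwise_le_range', List.pairwise_le_range', ?_⟩
    intro a ha b hb
    simp only [List.mem_range'_1] at ha hb
    omega
  have := (List.toFinset_sort (r := (· ≤ ·)) hnd).2 hs
  rw [← this]
  congr 1
  ext a
  simp only [Finset.mem_erase, Finset.mem_Icc, List.mem_toFinset, List.mem_append, List.mem_range'_1]
  omega

lemma C_r_eq {R : Type*} [Ring R] (M Mi : ℕ → ℤ → R) (m : ℕ → ℤ → Rˣ) (r : ℕ)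
    (h0 : ∀ n, uxi m 0 n = 1)
    (hx : ∀ α n, 1 ≤ α → α ≤ r + 1 → xv M Mi α n = ux m α n) :
    CMiura M Mi r r 0 = ((uxi m (r + 1) 0)⁻¹ : Rˣ) *
      ∑ k ∈ Finset.range (r + 1), ((uxi m (k + 1) 0 * (uxi m k 1)⁻¹ : Rˣ) : R) := by
  have hps : Finset.powersetCard r (Finset.Icc 1 (r + 1))
      = (Finset.range (r + 1)).image (fun k => (Finset.Icc 1 (r + 1)).erase (k + 1)) := by
    symm
    apply Finset.eq_of_subset_of_card_le
    · intro S hS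
      simp only [Finset.mem_image, Finset.mem_range] at hS
      obtain ⟨k, hk, rfl⟩ := hS
      rw [Finset.mem_powersetCard]
      refine ⟨Finset.erase_subset _ _, ?_⟩
      rw [Finset.card_erase_of_mem (by simp; omega)]
      simp
    · rw [Finset.card_image_of_injOn, Finset.card_powersetCard]
      · simp
      · intro a ha b hb hab
        simp only [Finset.coe_range, Set.mem_Iio] at ha hb
        by_contra hne
        have : a + 1 ∈ (Finset.Icc 1 (r + 1)).erase (b + 1) := by simp; omega
        simp only at hab
        rw [← hab] at this
        simp at this
  have hinj : Set.InjOn (fun k => (Finset.Icc 1 (r + 1)).erase (k + 1))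
      (Finset.range (r + 1) : Set ℕ) := by
    intro a ha b hb hab
    simp only [Finset.coe_range, Set.mem_Iio] at ha hb
    by_contra hne
    have : a + 1 ∈ (Finset.Icc 1 (r + 1)).erase (b + 1) := by simp; omega
    simp only at hab
    rw [← hab] at this
    simp at this
  unfold CMiura
  rw [hps, Finset.sum_image hinj, Finset.mul_sum]
  apply Finset.sum_congr rfl
  intro t ht
  have ht' : t < r + 1 := Finset.mem_range.1 ht
  rw [sort_erase r t (by omega), List.reverse_append, List.zipIdx_append, List.map_append,
    List.prod_append]
  simp only [zero_add, List.length_reverse, List.length_range']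
  have p1 := prod_desc M Mi m ((r : ℤ) + 1) (t + 1) (r - t) 0
    (fun α n h1 h2 => hx α n h1 (by omega))
  have p2 := prod_desc M Mi m ((r : ℤ) + 1) 0 t (r - t)
    (fun α n h1 h2 => hx α n h1 (by omega))
  simp only [zero_add] at p1 p2
  rw [p1, p2, ← Units.val_mul, ← Units.val_mul]
  congr 1
  have c1 : (r : ℤ) + 1 - (((t + 1 : ℕ) : ℤ) + ((r - t : ℕ) : ℤ)) - ((0 : ℕ) : ℤ) = 0 := by
    push_cast [Nat.cast_sub (show t ≤ r by omega)]; ring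
  have c2 : (r : ℤ) + 1 - (((0 : ℕ) : ℤ) + (t : ℤ)) - ((r - t : ℕ) : ℤ) = 1 := by
    push_cast [Nat.cast_sub (show t ≤ r by omega)]; ring
  rw [c1, c2, h0, show t + 1 + (r - t) = r + 1 by omega]
  group

lemma C_1_eq {R : Type*} [Ring R] (M Mi : ℕ → ℤ → R) (m : ℕ → ℤ → Rˣ) (r : ℕ)
    (hx : ∀ α n, 1 ≤ α → α ≤ r + 1 → xv M Mi α n = ux m α n) :
    CMiura M Mi r 1 0 =
      ∑ k ∈ Finset.range (r + 1), (((uxi m (k + 1) (r - k))⁻¹ * (uxi m k (r - k)) : Rˣ) : R) := by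
  unfold CMiura
  rw [Finset.powersetCard_one, Finset.sum_map]
  rw [← Finset.Ico_add_one_right_eq_Icc, Finset.sum_Ico_eq_sum_range]
  apply Finset.sum_congr (by simp)
  intro k hk
  have hk' : k < r + 1 := by simpa using hk
  simp
  rw [hx _ _ (by omega) (by omega), ux, add_comm 1 k,
    show (r : ℤ) + 1 - (1 + k) = r - k by ring]
  simp

lemma int_const {X : Type*} (F : ℤ → X) (h : ∀ s, F s = F (s - 1)) (s t : ℤ) : F s = F t := by
  have h0 : ∀ s, F s = F 0 := by
    intro s
    induction s using Int.induction_on with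
    | zero => rfl
    | succ i ih => rw [h, add_sub_cancel_right, ih]
    | pred i ih => rw [← h, ih]
  rw [h0 s, h0 t]

lemma main_units {R : Type*} [Ring R] (q : Rˣ) (hq : ∀ x : Rˣ, q * x = x * q)
    (r : ℕ) (M Mi : ℕ → ℤ → R) (m : ℕ → ℤ → Rˣ) (hm : ∀ α n, α ≤ r + 1 → (m α n : R) = M α n)
    (hm0 : ∀ n, m 0 n = 1)
    (hx : ∀ α n, 1 ≤ α → α ≤ r + 1 → xv M Mi α n = ux m α n)
    (hMtop : ∀ n : ℤ, M (r + 2) n = 0)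
    (hMsys : ∀ (α : ℕ) (n : ℤ), 1 ≤ α → α ≤ r + 1 →
      (q : R) ^ α * M α (n + 1) * M α (n - 1) = M α n ^ 2 - M (α + 1) n * M (α - 1) n)
    (hext : ∀ (α β : ℕ) (n k : ℤ), α ≤ r + 1 → β ≤ r + 1 →
      |k - n| ≤ |(β : ℤ) - (α : ℤ)| + 1 →
      QC q ((k - n) * ((min α β : ℕ) : ℤ)) (m α n) (m β k)) (n : ℤ) :
    (CMiura M Mi r 1 0 * M 1 n - M 1 n * CMiura M Mi r 1 0 = (1 - (q : R)) * M 1 (n + 1))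
      ∧ (((uxi m (r + 1) 0 : Rˣ) : R) * CMiura M Mi r r 0 * M 1 n
            - M 1 n * (((uxi m (r + 1) 0 : Rˣ) : R) * CMiura M Mi r r 0)
          = (1 - ((q⁻¹ : Rˣ) : R)) * M 1 (n - 1)) := by
  have hc : ∀ (k : ℤ) x, q ^ k * x = x * q ^ k := fun k x => (Commute.zpow_left (hq x) k)
  have h0 : ∀ n, uxi m 0 n = 1 := by intro n; simp [uxi, hm0]
  have hY0 : ∀ n, uY M m 0 n = 0 := by intro n; simp [uY]
  have hYt : ∀ n, uY M m (r + 1) n = 0 := by intro n; simp [uY, hMtop]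
  have hU : ∀ α n, α ≤ r + 1 →
      (((uxi m α n)⁻¹ * uxi m α (n - 1) : Rˣ) : R) = 1 - uY M m α n := by
    intro α n hα
    rcases Nat.eq_zero_or_pos α with rfl | hpos
    · simp [h0, hY0]
    · have e : uY M m α n
          = (M (α + 1) n * M (α - 1) n) * (((m α n)⁻¹ * (m α n)⁻¹ : Rˣ) : R) := by
        unfold uY; rw [if_neg (by omega)]
      rw [e, ← U_ring (z := q ^ (α : ℤ)) (e := m α (n + 1)) (f := m α (n - 1)) (hc _)]
      · simp [uxi]
      · have := hext α α (n - 1) n hα hα (by simp)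
        simpa [QC] using this
      · have := hMsys α n hpos hα
        rw [hm _ _ hα, hm _ _ hα, hm _ _ hα, ← this]
        simp
  have hK : ∀ β n, β ≤ r + 1 → (uxi m β n : R) * uY M m β n * ((uxi m (β - 1) n)⁻¹ : Rˣ)
      = uxi m (β + 1) n * uY M m β (n + 1) * ((uxi m β n)⁻¹ : Rˣ) := by
    intro β n hβ
    rcases Nat.eq_zero_or_pos β with rfl | hpos
    · simp [hY0]
    rcases Nat.lt_or_ge r β with hlt | hle
    · have : β = r + 1 := by omega
      subst this
      simp [hYt]
    have hYu : ∀ n, uY M m β n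
        = ((m (β + 1) n * m (β - 1) n * (m β n)⁻¹ * (m β n)⁻¹ : Rˣ) : R) := by
      intro n
      unfold uY; rw [if_neg (by omega)]
      simp [hm (β + 1) n (by omega), hm (β - 1) n (by omega), mul_assoc]
    rw [hYu, hYu]
    simp only [← Units.val_mul]
    congr 1
    have hcomm : ∀ α γ n, α ≤ r + 1 → γ ≤ r + 1 → m α n * m γ n = m γ n * m α n := by
      intro α γ n h1 h2
      have := hext α γ n n h1 h2 (by rw [sub_self, abs_zero]; positivity)
      simpa [QC] using this
    have hstep : ∀ α γ n, α ≤ r + 1 → γ ≤ r + 1 →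
        m α n * m γ (n + 1) = q ^ ((min α γ : ℕ) : ℤ) * (m γ (n + 1) * m α n) := by
      intro α γ n h1 h2
      have := hext α γ n (n + 1) h1 h2 (by simp)
      simpa [QC] using this
    have k1 := hstep (β + 1) β n (by omega) (by omega)
    have k2 := hstep β (β - 1) n (by omega) (by omega)
    have k3 := hstep (β - 1) (β - 1) n (by omega) (by omega)
    have k4 := hstep β β n (by omega) (by omega)
    rw [show min (β + 1) β = β by omega] at k1
    rw [show min β (β - 1) = β - 1 by omega] at k2
    rw [min_self] at k3 k4
    have := K_group (hc _) k1 k2 k3 k4 (hcomm _ _ _ (by omega) (by omega))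
      (hcomm _ _ _ (by omega) (by omega))
    unfold uxi
    rw [this]
    have h7 := hcomm β (β - 1) (n + 1) (by omega) (by omega)
    have h7' : (m β (n + 1))⁻¹ * m (β - 1) (n + 1) = m (β - 1) (n + 1) * (m β (n + 1))⁻¹ := by
      rw [eq_mul_inv_iff_mul_eq, mul_assoc, ← h7]; group
    calc m (β + 1) n * (m β (n + 1))⁻¹ * (m (β - 1) (n + 1) * (m β n)⁻¹)
        = m (β + 1) n * ((m β (n + 1))⁻¹ * m (β - 1) (n + 1)) * (m β n)⁻¹ := by group
      _ = _ := by rw [h7']; group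
  have tx := int_const _ (tele_x r (uxi m) (uY M m) hY0 hYt hU hK)
  have tv := int_const (fun n : ℤ =>
    ∑ k ∈ Finset.range (r + 1), ((uxi m (k + 1) n * (uxi m k (n + 1))⁻¹ : Rˣ) : R)) (by
      intro s
      simp only [sub_add_cancel]
      exact tele_v r (uxi m) (uY M m) hY0 hYt hU hK s)
  have q1 : ∀ (β : ℕ) (k : ℤ), 1 ≤ β → β ≤ r + 1 → |k - n| ≤ β → QC q (k - n) (m 1 n) (m β k) := by
    intro β k h1 h2 h3
    have := hext 1 β n k (by omega) h2 (by
      rw [abs_of_nonneg (show (0 : ℤ) ≤ (β : ℤ) - (1 : ℕ) by push_cast; omega)]; push_cast; omega)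
    rwa [min_eq_left h1, Nat.cast_one, mul_one] at this
  have qxi : ∀ (β : ℕ) (k : ℤ), 1 ≤ β → β ≤ r + 1 → |k - n| ≤ β → |k + 1 - n| ≤ β →
      QC q (-1) (m 1 n) (uxi m β k) := by
    intro β k h1 h2 h3 h4
    have := (q1 β k h1 h2 h3).mul' hq ((q1 β (k + 1) h1 h2 h4).inv' hq)
    rwa [show k - n + -(k + 1 - n) = -1 by ring] at this
  have hcom1 : ∀ {x : Rˣ}, QC q 0 (m 1 n) x → (x : R) * M 1 n - M 1 n * x = 0 := by
    intro x h
    have h' : m 1 n * x = x * m 1 n := by simpa [QC] using h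
    rw [← hm 1 n (by omega), ← Units.val_mul, ← Units.val_mul, h', sub_self]
  constructor
  · rw [C_1_eq M Mi m r hx]
    have := tx r n
    rw [this, Finset.sum_mul, Finset.mul_sum, ← Finset.sum_sub_distrib, Finset.sum_range_succ',
      Finset.sum_eq_zero, zero_add]
    · simp only [h0, Nat.cast_zero, sub_zero, zero_add, mul_one]
      have h := hext 1 1 n (n + 1) (by omega) (by omega) (by simp)
      simp only [QC, add_sub_cancel_left, min_self, Nat.cast_one, mul_one, zpow_one] at h
      have e1 : (uxi m 1 n)⁻¹ * m 1 n = m 1 (n + 1) := by unfold uxi; group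
      have e2 : m 1 n * (uxi m 1 n)⁻¹ = q * m 1 (n + 1) := by
        unfold uxi
        rw [mul_inv_rev, inv_inv, ← mul_assoc, h]; group
      rw [← hm 1 n (by omega), ← hm 1 (n + 1) (by omega), ← Units.val_mul, ← Units.val_mul, e1, e2,
        Units.val_mul, sub_mul, one_mul]
    · intro k hk
      have hk' : k < r := Finset.mem_range.1 hk
      apply hcom1
      have a1 := qxi (k + 1 + 1) (n - ((k + 1 : ℕ) : ℤ)) (by omega) (by omega)
        (by rw [abs_le]; push_cast; omega) (by rw [abs_le]; push_cast; omega)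
      have a2 := qxi (k + 1) (n - ((k + 1 : ℕ) : ℤ)) (by omega) (by omega)
        (by rw [abs_le]; push_cast; omega) (by rw [abs_le]; push_cast; omega)
      exact (a1.inv' hq).mul' hq a2
  · rw [C_r_eq M Mi m r h0 hx, Units.mul_inv_cancel_left]
    have := tv 0 (n - 1)
    simp only [zero_add, sub_add_cancel] at this
    rw [this, Finset.sum_mul, Finset.mul_sum, ← Finset.sum_sub_distrib, Finset.sum_range_succ',
      Finset.sum_eq_zero, zero_add]
    · simp only [h0, zero_add, inv_one, mul_one]
      have h := hext 1 1 n (n - 1) (by omega) (by omega) (by simp)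
      simp only [QC, min_self, Nat.cast_one, mul_one, show n - 1 - n = -1 by ring, zpow_neg,
        zpow_one] at h
      have e1 : uxi m 1 (n - 1) * m 1 n = m 1 (n - 1) := by
        unfold uxi; rw [sub_add_cancel]; group
      have e2 : m 1 n * uxi m 1 (n - 1) = q⁻¹ * m 1 (n - 1) := by
        unfold uxi
        rw [sub_add_cancel, ← mul_assoc, h]; group
      rw [← hm 1 n (by omega), ← hm 1 (n - 1) (by omega), ← Units.val_mul, ← Units.val_mul, e1, e2,
        Units.val_mul, sub_mul, one_mul]
    · intro k hk
      have hk' : k < r := Finset.mem_range.1 hk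
      apply hcom1
      have a1 := qxi (k + 1 + 1) (n - 1) (by omega) (by omega)
        (by rw [abs_le]; push_cast; omega) (by rw [abs_le]; push_cast; omega)
      have a2 := qxi (k + 1) n (by omega) (by omega)
        (by rw [abs_le]; push_cast; omega) (by rw [abs_le]; push_cast; omega)
      exact a1.mul' hq (a2.inv' hq)

end helpers

theorem quantum_Q_time_shifts
    {R : Type*} [Ring R] (q A Δ : Rˣ)
    (hq : ∀ x : R, (q : R) * x = x * (q : R))
    (r : ℕ) (hr : 1 ≤ r)
    (M Mi : ℕ → ℤ → R)
    (hM0 : ∀ n : ℤ, M 0 n = 1)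
    (hMtop : ∀ n : ℤ, M (r + 2) n = 0)
    (hMiL : ∀ (α : ℕ) (n : ℤ), α ≤ r + 1 → M α n * Mi α n = 1)
    (hMiR : ∀ (α : ℕ) (n : ℤ), α ≤ r + 1 → Mi α n * M α n = 1)
    (hMsys : ∀ (α : ℕ) (n : ℤ), 1 ≤ α → α ≤ r + 1 →
      (q : R) ^ α * M α (n + 1) * M α (n - 1) = M α n ^ 2 - M (α + 1) n * M (α - 1) n)
    (hcom : ∀ (α β ε : ℕ) (n : ℤ), ε ≤ 1 → α ≤ r + 1 → β ≤ r + 1 →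
      M α n * M β (n + (ε : ℤ)) = (q : R) ^ (ε * min α β) * M β (n + (ε : ℤ)) * M α n)
    (hAΔ : ∀ n : ℤ, M (r + 1) n = ((A ^ n : Rˣ) : R) * (Δ : R))
    (hΔM : ∀ (α : ℕ) (n : ℤ), 1 ≤ α → α ≤ r + 1 →
      (Δ : R) * M α n = ((q ^ ((α : ℤ) * n) : Rˣ) : R) * M α n * (Δ : R))
    (hAM : ∀ (α : ℕ) (n : ℤ), 1 ≤ α → α ≤ r + 1 →
      (A : R) * M α n = ((q ^ (-(α : ℤ)) : Rˣ) : R) * M α n * (A : R))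
    (hΔA : (Δ : R) * (A : R) = (q : R) ^ (r + 1) * (A : R) * (Δ : R))
    (hext : ∀ (α β : ℕ) (n p : ℤ), α ≤ r + 1 → β ≤ r + 1 →
      |p| ≤ |(β : ℤ) - (α : ℤ)| + 1 →
      M α n * M β (n + p) = ((q ^ (p * ((min α β : ℕ) : ℤ)) : Rˣ) : R) * M β (n + p) * M α n) :
    ∀ n : ℤ,
      (CMiura M Mi r 1 0 * M 1 n - M 1 n * CMiura M Mi r 1 0 = (1 - (q : R)) * M 1 (n + 1))
      ∧ (((A⁻¹ : Rˣ) : R) * CMiura M Mi r r 0 * M 1 n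
            - M 1 n * (((A⁻¹ : Rˣ) : R) * CMiura M Mi r r 0)
          = (1 - ((q⁻¹ : Rˣ) : R)) * M 1 (n - 1)) := by
  intro n
  let m : ℕ → ℤ → Rˣ := fun α n =>
    if h : α ≤ r + 1 then ⟨M α n, Mi α n, hMiL α n h, hMiR α n h⟩ else 1
  have hm : ∀ α n, α ≤ r + 1 → (m α n : R) = M α n := by
    intro α n h; simp [m, h]
  have hmi : ∀ α n, α ≤ r + 1 → (((m α n)⁻¹ : Rˣ) : R) = Mi α n := by
    intro α n h; simp [m, h]
  have hA : uxi m (r + 1) 0 = A⁻¹ := by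
    have h1 : ∀ n, m (r + 1) n = A ^ n * Δ := by
      intro n
      apply Units.ext
      rw [hm _ _ le_rfl, hAΔ]; simp
    unfold uxi
    rw [h1, h1]; group
  have := main_units q (fun x => Units.ext (hq x)) r M Mi m hm
    (fun n => Units.ext (by rw [hm _ _ (by omega), hM0]; rfl))
    (by
      intro α n h1 h2
      simp only [xv, xiv, xivInv, ux, uxi, mul_inv_rev, inv_inv, Units.val_mul]
      rw [hm _ _ h2, hmi _ _ h2, hm _ _ (by omega), hmi _ _ (by omega)])
    hMtop hMsys
    (by
      intro α β n k h1 h2 h3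
      have := hext α β n (k - n) h1 h2 h3
      rw [add_sub_cancel] at this
      apply Units.ext
      rw [Units.val_mul, Units.val_mul, Units.val_mul, hm _ _ h1, hm _ _ h2, this, mul_assoc]) n
  rw [hA] at this
  exact this
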